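/- Compactness of the weighted K₂ operator: for every β, γ > 0, the integral operator on L²(0,2π) with kernel a(p)^{−1/2} · K₂(p,q) · a(q)^{−1/2} is a well-defined bounded linear operator which is compact (indeed Hilbert–Schmidt, since its kernel is bounded by a constant times sin(p/2)^{−1/3} · sin(q/2)^{−1/3}). -/

import Mathlib

open MeasureTheory Real Set

noncomputable section

/-- The dispersion relation `ω(p) = |sin(p/2)|`. -/
def ω (p : ℝ) : ℝ := |Real.sin (p / 2)|

/-- Parameterization `h(x,z)` of the resonant manifold. -/
def resH (x z : ℝ) : ℝ :=
  (z - x) / 2 + 2 * Real.arcsin (Real.tan (|z - x| / 4) * Real.cos ((x + z) / 4))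

/-- `F₊(x,z) = (cos(x/2)+cos(z/2))² + 4 sin(x/2) sin(z/2)`. -/
def Fplus (x z : ℝ) : ℝ :=
  (Real.cos (x / 2) + Real.cos (z / 2)) ^ 2 + 4 * Real.sin (x / 2) * Real.sin (z / 2)

/-- `F₋(x,z) = (cos(x/2)+cos(z/2))² − 4 sin(x/2) sin(z/2)`. -/
def Fminus (x z : ℝ) : ℝ :=
  (Real.cos (x / 2) + Real.cos (z / 2)) ^ 2 - 4 * Real.sin (x / 2) * Real.sin (z / 2)

/-- The Rayleigh–Jeans equilibrium `𝔣(p) = 1/(βω(p)+γ)`. -/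
def fRJ (β γ p : ℝ) : ℝ := 1 / (β * ω p + γ)

/-- The collision frequency `a(p)`, with `p₁ = h(p,p₂)` and `p₃ = p + p₁ − p₂`. -/
def afreq (β γ p : ℝ) : ℝ :=
  ω p / fRJ β γ p *
    ∫ q in (0:ℝ)..(2 * π),
      ω (resH p q) * ω q * ω (p + resH p q - q) *
        (fRJ β γ (resH p q) * fRJ β γ q * fRJ β γ (p + resH p q - q)) / Real.sqrt (Fplus p q)

/-- The kernel `K₂(p,q)`, with `p₁ = h(p,q)` and `p₃ = p + p₁ − q`. -/
def K2 (β γ p q : ℝ) : ℝ :=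
  ω p * ω (resH p q) * ω q * ω (p + resH p q - q) *
    (fRJ β γ (resH p q) * fRJ β γ (p + resH p q - q)) / Real.sqrt (Fplus p q)

/-- `p₂ = (p+q)/2 + 2 arcsin(tan((p+q)/4) cos((p−q)/4))`, as used in the kernel `K₁`. -/
def p2aux (p q : ℝ) : ℝ :=
  (p + q) / 2 + 2 * Real.arcsin (Real.tan ((p + q) / 4) * Real.cos ((p - q) / 4))

/-- The kernel `K₁(p,q)`, with `p₂ = p2aux p q` and `p₃ = p + q − p₂`. -/
def K1 (β γ p q : ℝ) : ℝ :=
  if 0 < Fminus p q then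
    ω p * ω q * ω (p2aux p q) * ω (p + q - p2aux p q) *
      (fRJ β γ (p2aux p q) * fRJ β γ (p + q - p2aux p q)) / Real.sqrt (Fminus p q)
  else 0

/-- The linearized operator `L`, acting pointwise on functions. -/
def Lfun (β γ : ℝ) (g : ℝ → ℝ) (p : ℝ) : ℝ :=
  -(afreq β γ p * g p) - (∫ q in (0:ℝ)..(2 * π), K1 β γ p q * g q)
    + 2 * ∫ q in (0:ℝ)..(2 * π), K2 β γ p q * g q

/-- The measure on the fundamental domain `(0,2π)`. -/
def μ2π : Measure ℝ := volume.restrict (Set.Ioo 0 (2 * π))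

/-!
On the resonant manifold `ω(p₁) ω(p₃) = tan²((q - p)/4) sin(p/2) sin(q/2)`, so up to bounded
Rayleigh–Jeans factors `K₂` is an explicit trigonometric kernel, and the collision frequency is
`a(p) = 𝔣(p)⁻¹ ∫ K₂(p, q) 𝔣(q) dq`. Restricting this integral to `q` at distance about
`sin(p/2)^{1/3}` from the endpoint opposite to `p` gives `a(p) ≥ c sin(p/2)^{5/3}`. On the other
hand `F₊(p, q) ≥ sin(p/2) sin(q/2)` gives `K₂(p, q) ≤ C sin(p/2)^{1/2} sin(q/2)^{1/2}`. Since
`1/2 - 5/6 = -1/3`, the weighted kernel is bounded by a multiple of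
`sin(p/2)^{-1/3} sin(q/2)^{-1/3}`, which is square integrable.

An `L²` kernel defines a compact operator: the kernels whose operator is compact form a closed
subspace of `L²`, which contains the indicators of rectangles (they give operators of rank one),
and a function orthogonal to all of those vanishes.
-/

section KernelOperator

open scoped ENNReal InnerProductSpace

variable {𝕜 X Y : Type*} [RCLike 𝕜] [MeasurableSpace Y] {ν : Measure Y}

/-- The integral transform `x ↦ ∫ k(x, y) g(y) dν(y)` of `g` with kernel `k`. -/
def kernelIntegral (ν : Measure Y) (k : X × Y → 𝕜) (g : Y → 𝕜) (x : X) : 𝕜 :=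
  ∫ y, k (x, y) * g y ∂ν

lemma kernelIntegral_smul_left (c : 𝕜) (k : X × Y → 𝕜) (g : Y → 𝕜) :
    kernelIntegral ν (c • k) g = c • kernelIntegral ν k g := by
  ext x
  simp only [kernelIntegral, Pi.smul_apply, smul_mul_assoc, integral_smul]

lemma kernelIntegral_smul_right (c : 𝕜) (k : X × Y → 𝕜) (g : Y → 𝕜) :
    kernelIntegral ν k (c • g) = c • kernelIntegral ν k g := by
  ext x
  simp only [kernelIntegral, Pi.smul_apply, mul_smul_comm, integral_smul]

lemma kernelIntegral_indicator_prod {A : Set X} {B : Set Y} (hB : MeasurableSet B) (g : Y → 𝕜) :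
    kernelIntegral ν ((A ×ˢ B).indicator fun _ ↦ 1) g =
      (∫ y in B, g y ∂ν) • A.indicator fun _ ↦ 1 := by
  classical
  ext x
  rw [← integral_indicator hB]
  by_cases hx : x ∈ A <;> simp [kernelIntegral, indicator_apply, hx]

lemma enorm_integral_mul_le_eLpNorm_mul_eLpNorm {f g : Y → 𝕜}
    (hf : AEStronglyMeasurable f ν) (hg : AEStronglyMeasurable g ν) :
    ‖∫ y, f y * g y ∂ν‖ₑ ≤ eLpNorm f 2 ν * eLpNorm g 2 ν :=
  calc ‖∫ y, f y * g y ∂ν‖ₑ ≤ ∫⁻ y, ‖f y * g y‖ₑ ∂ν := enorm_integral_le_lintegral_enorm _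
    _ = eLpNorm (f • g) 1 ν := eLpNorm_one_eq_lintegral_enorm.symm
    _ ≤ eLpNorm f 2 ν * eLpNorm g 2 ν := eLpNorm_smul_le_mul_eLpNorm hg hf

variable [MeasurableSpace X] {μ : Measure X}

lemma eLpNorm_two_sq_eq_lintegral (f : X → 𝕜) :
    eLpNorm f 2 μ ^ 2 = ∫⁻ x, ‖f x‖ₑ ^ 2 ∂μ := by
  simpa using eLpNorm_nnreal_pow_eq_lintegral (f := f) (μ := μ) (p := 2) two_ne_zero

lemma lintegral_eLpNorm_two_sq_eq [SFinite ν] {k : X × Y → 𝕜}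
    (hk : AEStronglyMeasurable k (μ.prod ν)) :
    ∫⁻ x, eLpNorm (fun y ↦ k (x, y)) 2 ν ^ 2 ∂μ = eLpNorm k 2 (μ.prod ν) ^ 2 := by
  simp only [eLpNorm_two_sq_eq_lintegral]
  exact (lintegral_prod _ (hk.enorm.pow_const 2)).symm

lemma eLpNorm_kernelIntegral_le [SFinite ν] {k : X × Y → 𝕜} {g : Y → 𝕜}
    (hk : AEStronglyMeasurable k (μ.prod ν)) (hg : AEStronglyMeasurable g ν) :
    eLpNorm (kernelIntegral ν k g) 2 μ ≤ eLpNorm k 2 (μ.prod ν) * eLpNorm g 2 ν := by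
  rw [← ENNReal.pow_le_pow_left_iff two_ne_zero, mul_pow, ← lintegral_eLpNorm_two_sq_eq hk,
    eLpNorm_two_sq_eq_lintegral]
  have hsection : AEMeasurable (fun x ↦ eLpNorm (fun y ↦ k (x, y)) 2 ν ^ 2) μ := by
    simp only [eLpNorm_two_sq_eq_lintegral]
    exact (hk.enorm.pow_const 2).lintegral_prod_right'
  rw [← lintegral_mul_const'' _ hsection]
  refine lintegral_mono_ae ?_
  filter_upwards [hk.prodMk_left] with x hx
  rw [← mul_pow]
  gcongr
  exact enorm_integral_mul_le_eLpNorm_mul_eLpNorm hx hg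

lemma memLp_kernelIntegral [SFinite ν] {k : X × Y → 𝕜} {g : Y → 𝕜}
    (hk : MemLp k 2 (μ.prod ν)) (hg : MemLp g 2 ν) : MemLp (kernelIntegral ν k g) 2 μ :=
  ⟨(hk.1.mul hg.1.comp_snd).integral_prod_right',
    (eLpNorm_kernelIntegral_le hk.1 hg.1).trans_lt (ENNReal.mul_lt_top hk.2 hg.2)⟩

lemma ae_integrable_kernel_mul [SFinite μ] [SFinite ν] {k : X × Y → 𝕜} {g : Y → 𝕜}
    (hk : MemLp k 2 (μ.prod ν)) (hg : MemLp g 2 ν) :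
    ∀ᵐ x ∂μ, Integrable (fun y ↦ k (x, y) * g y) ν := by
  have hsq : Integrable (fun z ↦ ‖k z‖ ^ 2) (μ.prod ν) :=
    (memLp_two_iff_integrable_sq_norm hk.1).1 hk
  filter_upwards [hsq.prod_right_ae, hk.1.prodMk_left] with x hx hmeas
  exact ((memLp_two_iff_integrable_sq_norm hmeas).2 hx).integrable_mul hg

lemma kernelIntegral_congr_ae [SFinite ν] {k k' : X × Y → 𝕜} {g g' : Y → 𝕜}
    (hk : k =ᵐ[μ.prod ν] k') (hg : g =ᵐ[ν] g') :
    kernelIntegral ν k g =ᵐ[μ] kernelIntegral ν k' g' := by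
  filter_upwards [Measure.ae_ae_of_ae_prod hk] with x hx
  refine integral_congr_ae ?_
  filter_upwards [hx, hg] with y hky hgy
  rw [hky, hgy]

lemma kernelIntegral_add_left_ae [SFinite μ] [SFinite ν] {k k' : X × Y → 𝕜} {g : Y → 𝕜}
    (hk : MemLp k 2 (μ.prod ν)) (hk' : MemLp k' 2 (μ.prod ν)) (hg : MemLp g 2 ν) :
    kernelIntegral ν (k + k') g =ᵐ[μ] kernelIntegral ν k g + kernelIntegral ν k' g := by
  filter_upwards [ae_integrable_kernel_mul hk hg, ae_integrable_kernel_mul hk' hg] with x hx hx'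
  simp only [kernelIntegral, Pi.add_apply, add_mul, integral_add hx hx']

lemma kernelIntegral_add_right_ae [SFinite μ] [SFinite ν] {k : X × Y → 𝕜} {g g' : Y → 𝕜}
    (hk : MemLp k 2 (μ.prod ν)) (hg : MemLp g 2 ν) (hg' : MemLp g' 2 ν) :
    kernelIntegral ν k (g + g') =ᵐ[μ] kernelIntegral ν k g + kernelIntegral ν k g' := by
  filter_upwards [ae_integrable_kernel_mul hk hg, ae_integrable_kernel_mul hk hg'] with x hx hx'
  simp only [kernelIntegral, Pi.add_apply, mul_add, integral_add hx hx']

section Bilinear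

variable [SFinite ν]

/-- The integral transform of `g ∈ L²(ν)` with kernel `k ∈ L²(μ × ν)`, as an element of `L²(μ)`. -/
def kernelIntegralLp (k : Lp 𝕜 2 (μ.prod ν)) (g : Lp 𝕜 2 ν) : Lp 𝕜 2 μ :=
  (memLp_kernelIntegral (Lp.memLp k) (Lp.memLp g)).toLp _

lemma coeFn_kernelIntegralLp (k : Lp 𝕜 2 (μ.prod ν)) (g : Lp 𝕜 2 ν) :
    kernelIntegralLp k g =ᵐ[μ] kernelIntegral ν k g :=
  MemLp.coeFn_toLp _

lemma norm_kernelIntegralLp_le (k : Lp 𝕜 2 (μ.prod ν)) (g : Lp 𝕜 2 ν) :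
    ‖kernelIntegralLp k g‖ ≤ ‖k‖ * ‖g‖ := by
  rw [kernelIntegralLp, Lp.norm_toLp, Lp.norm_def, Lp.norm_def, ← ENNReal.toReal_mul]
  exact ENNReal.toReal_mono (by finiteness)
    (eLpNorm_kernelIntegral_le (Lp.aestronglyMeasurable k) (Lp.aestronglyMeasurable g))

lemma kernelIntegralLp_smul_left (c : 𝕜) (k : Lp 𝕜 2 (μ.prod ν)) (g : Lp 𝕜 2 ν) :
    kernelIntegralLp (c • k) g = c • kernelIntegralLp k g := by
  refine (MemLp.toLp_congr _ _ ?_).trans (MemLp.toLp_const_smul c _)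
  exact (kernelIntegral_congr_ae (Lp.coeFn_smul c k) .rfl).trans
    (kernelIntegral_smul_left c k g).eventuallyEq

lemma kernelIntegralLp_smul_right (c : 𝕜) (k : Lp 𝕜 2 (μ.prod ν)) (g : Lp 𝕜 2 ν) :
    kernelIntegralLp k (c • g) = c • kernelIntegralLp k g := by
  refine (MemLp.toLp_congr _ _ ?_).trans (MemLp.toLp_const_smul c _)
  exact (kernelIntegral_congr_ae .rfl (Lp.coeFn_smul c g)).trans
    (kernelIntegral_smul_right c k g).eventuallyEq

variable [SFinite μ]

lemma kernelIntegralLp_add_left (k k' : Lp 𝕜 2 (μ.prod ν)) (g : Lp 𝕜 2 ν) :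
    kernelIntegralLp (k + k') g = kernelIntegralLp k g + kernelIntegralLp k' g := by
  refine (MemLp.toLp_congr _ _ ?_).trans (MemLp.toLp_add _ _)
  exact (kernelIntegral_congr_ae (Lp.coeFn_add k k') .rfl).trans
    (kernelIntegral_add_left_ae (Lp.memLp k) (Lp.memLp k') (Lp.memLp g))

lemma kernelIntegralLp_add_right (k : Lp 𝕜 2 (μ.prod ν)) (g g' : Lp 𝕜 2 ν) :
    kernelIntegralLp k (g + g') = kernelIntegralLp k g + kernelIntegralLp k g' := by
  refine (MemLp.toLp_congr _ _ ?_).trans (MemLp.toLp_add _ _)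
  exact (kernelIntegral_congr_ae .rfl (Lp.coeFn_add g g')).trans
    (kernelIntegral_add_right_ae (Lp.memLp k) (Lp.memLp g) (Lp.memLp g'))

/-- The Hilbert–Schmidt operator `L²(ν) → L²(μ)` with kernel in `L²(μ × ν)`, as a continuous
bilinear map of the kernel and the argument. -/
def kernelOperator (𝕜 : Type*) [RCLike 𝕜] (μ : Measure X) (ν : Measure Y) [SFinite μ]
    [SFinite ν] : Lp 𝕜 2 (μ.prod ν) →L[𝕜] Lp 𝕜 2 ν →L[𝕜] Lp 𝕜 2 μ :=
  LinearMap.mkContinuous₂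
    (LinearMap.mk₂ 𝕜 (fun k g ↦ kernelIntegralLp k g) kernelIntegralLp_add_left
      kernelIntegralLp_smul_left kernelIntegralLp_add_right kernelIntegralLp_smul_right)
    1 fun k g ↦ (norm_kernelIntegralLp_le k g).trans_eq (by rw [one_mul])

lemma coeFn_kernelOperator (k : Lp 𝕜 2 (μ.prod ν)) (g : Lp 𝕜 2 ν) :
    kernelOperator 𝕜 μ ν k g =ᵐ[μ] kernelIntegral ν k g :=
  coeFn_kernelIntegralLp k g

end Bilinear

lemma ae_eq_zero_of_forall_setIntegral_prod_eq_zero {ρ : Measure (X × Y)} {f : X × Y → 𝕜}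
    (hf : Integrable f ρ) (hzero : ∀ A B, MeasurableSet A → MeasurableSet B →
      ∫ z in A ×ˢ B, f z ∂ρ = 0) : f =ᵐ[ρ] 0 := by
  refine hf.ae_eq_zero_of_forall_setIntegral_eq_zero fun s hs hfin ↦ ?_
  clear hfin
  induction s, hs using MeasurableSpace.induction_on_inter generateFrom_prod.symm isPiSystem_prod
    with
  | empty => exact setIntegral_empty
  | basic t ht =>
    obtain ⟨A, hA, B, hB, rfl⟩ := ht
    exact hzero A B hA hB
  | compl t ht ih =>
    have huniv : ∫ z, f z ∂ρ = 0 := by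
      simpa using hzero univ univ .univ .univ
    rw [setIntegral_compl ht hf, huniv, ih, sub_zero]
  | iUnion t hdisj ht ih =>
    simp only [integral_iUnion ht hdisj hf.integrableOn, ih, tsum_zero]

variable [SigmaFinite μ] [SigmaFinite ν]

lemma kernelOperator_indicator_prod {A : Set X} {B : Set Y} (hA : MeasurableSet A)
    (hB : MeasurableSet B) (hμA : μ A ≠ ∞) (hνB : ν B ≠ ∞) (hAB : μ.prod ν (A ×ˢ B) ≠ ∞) :
    kernelOperator 𝕜 μ ν (indicatorConstLp 2 (hA.prod hB) hAB 1) =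
      (ContinuousLinearMap.toSpanSingleton 𝕜 (indicatorConstLp 2 hA hμA 1)).comp
        (innerSL 𝕜 (indicatorConstLp 2 hB hνB 1)) := by
  ext1 g
  rw [ContinuousLinearMap.comp_apply, innerSL_apply_apply, L2.inner_indicatorConstLp_one,
    ContinuousLinearMap.toSpanSingleton_apply]
  refine Lp.ext ?_
  calc ⇑(kernelOperator 𝕜 μ ν (indicatorConstLp 2 (hA.prod hB) hAB 1) g)
    _ =ᵐ[μ] kernelIntegral ν (indicatorConstLp 2 (hA.prod hB) hAB 1) g := coeFn_kernelOperator _ _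
    _ =ᵐ[μ] kernelIntegral ν ((A ×ˢ B).indicator fun _ ↦ 1) g :=
      kernelIntegral_congr_ae indicatorConstLp_coeFn .rfl
    _ = (∫ y in B, g y ∂ν) • A.indicator fun _ ↦ 1 := kernelIntegral_indicator_prod hB g
    _ =ᵐ[μ] (∫ y in B, g y ∂ν) • ⇑(indicatorConstLp 2 hA hμA 1) :=
      indicatorConstLp_coeFn.symm.const_smul _
    _ =ᵐ[μ] ⇑((∫ y in B, g y ∂ν) • indicatorConstLp 2 hA hμA (1 : 𝕜)) :=
      (Lp.coeFn_smul _ _).symm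

lemma isCompactOperator_kernelOperator_indicator_prod {A : Set X} {B : Set Y}
    (hA : MeasurableSet A) (hB : MeasurableSet B) (hμA : μ A ≠ ∞) (hνB : ν B ≠ ∞)
    (hAB : μ.prod ν (A ×ˢ B) ≠ ∞) :
    IsCompactOperator (kernelOperator 𝕜 μ ν (indicatorConstLp 2 (hA.prod hB) hAB 1)) := by
  rw [kernelOperator_indicator_prod hA hB hμA hνB hAB]
  exact (isCompactOperator_of_locallyCompactSpace_rng
    (ContinuousLinearMap.toSpanSingleton 𝕜 _)).comp_clm _

lemma ae_eq_zero_of_forall_setIntegral_finite_prod_eq_zero {f : X × Y → 𝕜}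
    (hf : ∀ A B, μ A ≠ ∞ → ν B ≠ ∞ → IntegrableOn f (A ×ˢ B) (μ.prod ν))
    (hzero : ∀ A B, MeasurableSet A → MeasurableSet B → μ A ≠ ∞ → ν B ≠ ∞ →
      ∫ z in A ×ˢ B, f z ∂μ.prod ν = 0) : f =ᵐ[μ.prod ν] 0 := by
  let S (n : ℕ) : Set (X × Y) := spanningSets μ n ×ˢ spanningSets ν n
  have hcover : ⋃ n, S n = univ := by
    rw [iUnion_prod_of_monotone (monotone_spanningSets μ) (monotone_spanningSets ν),
      iUnion_spanningSets, iUnion_spanningSets, univ_prod_univ]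
  rw [← Measure.restrict_univ (μ := μ.prod ν), ← hcover]
  refine (ae_restrict_iUnion_iff S _).2 fun n ↦ ?_
  have hμS : μ (spanningSets μ n) ≠ ∞ := (measure_spanningSets_lt_top μ n).ne
  have hνS : ν (spanningSets ν n) ≠ ∞ := (measure_spanningSets_lt_top ν n).ne
  refine ae_eq_zero_of_forall_setIntegral_prod_eq_zero (hf _ _ hμS hνS) fun A B hA hB ↦ ?_
  rw [Measure.restrict_restrict (hA.prod hB), prod_inter_prod]
  exact hzero _ _ (hA.inter (measurableSet_spanningSets μ n))
    (hB.inter (measurableSet_spanningSets ν n))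
    (measure_ne_top_of_subset inter_subset_right hμS)
    (measure_ne_top_of_subset inter_subset_right hνS)

theorem isCompactOperator_kernelOperator (k : Lp 𝕜 2 (μ.prod ν)) :
    IsCompactOperator (kernelOperator 𝕜 μ ν k) := by
  let compactKernels : Submodule 𝕜 (Lp 𝕜 2 (μ.prod ν)) :=
    (compactOperator (RingHom.id 𝕜) (Lp 𝕜 2 ν) (Lp 𝕜 2 μ)).comap (kernelOperator 𝕜 μ ν).toLinearMap
  have hclosed : IsClosed (compactKernels : Set (Lp 𝕜 2 (μ.prod ν))) :=
    isClosed_setOfPred_isCompactOperator.preimage (kernelOperator 𝕜 μ ν).continuous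
  have horth : compactKernelsᗮ = ⊥ := by
    refine (Submodule.eq_bot_iff _).2 fun f hf ↦ ?_
    have hfinite {A : Set X} {B : Set Y} (hμA : μ A ≠ ∞) (hνB : ν B ≠ ∞) :
        μ.prod ν (A ×ˢ B) ≠ ∞ := by
      rw [Measure.prod_prod]
      exact ENNReal.mul_ne_top hμA hνB
    refine (Lp.eq_zero_iff_ae_eq_zero).2 <|
      ae_eq_zero_of_forall_setIntegral_finite_prod_eq_zero
        (fun A B hμA hνB ↦ integrableOn_Lp_of_measure_ne_top f Fact.out (hfinite hμA hνB))
        fun A B hA hB hμA hνB ↦ ?_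
    rw [← L2.inner_indicatorConstLp_one (𝕜 := 𝕜) (hA.prod hB) (hfinite hμA hνB)]
    exact hf _ (isCompactOperator_kernelOperator_indicator_prod hA hB hμA hνB _)
  have htop : compactKernels = ⊤ := by
    rw [← hclosed.submodule_topologicalClosure_eq, Submodule.topologicalClosure_eq_top_iff, horth]
  exact (htop ▸ Submodule.mem_top : k ∈ compactKernels)

theorem exists_isCompactOperator_of_memLp_kernel {k : X × Y → 𝕜} (hk : MemLp k 2 (μ.prod ν)) :
    ∃ T : Lp 𝕜 2 ν →L[𝕜] Lp 𝕜 2 μ,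
      (∀ g : Lp 𝕜 2 ν, T g =ᵐ[μ] fun x ↦ ∫ y, k (x, y) * g y ∂ν) ∧ IsCompactOperator T :=
  ⟨kernelOperator 𝕜 μ ν (hk.toLp k),
    fun g ↦ (coeFn_kernelOperator _ g).trans (kernelIntegral_congr_ae hk.coeFn_toLp .rfl),
    isCompactOperator_kernelOperator _⟩

end KernelOperator

section Trigonometry

variable {x y : ℝ}

lemma sin_add_mul_sin_sub (x y : ℝ) : sin (x + y) * sin (x - y) = sin x ^ 2 - sin y ^ 2 := by
  rw [sin_add, sin_sub]
  linear_combination sin x ^ 2 * sin_sq_add_cos_sq y - sin y ^ 2 * sin_sq_add_cos_sq x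

lemma tan_mul_cos_sq (x : ℝ) (hy : cos y ≠ 0) :
    (tan y * cos x) ^ 2 = sin y ^ 2 - tan y ^ 2 * (sin (x + y) * sin (x - y)) := by
  rw [sin_add_mul_sin_sub]
  linear_combination tan y ^ 2 * sin_sq_add_cos_sq x - tan y ^ 2 * sin_sq_add_cos_sq y +
    (sin y + tan y * cos y) * tan_mul_cos hy

lemma div_pi_le_sin_half (hx0 : 0 ≤ x) (hx : x ≤ π) : x / π ≤ sin (x / 2) := by
  have h := mul_le_sin (x := x / 2) (by linarith) (by linarith)
  rwa [show 2 / π * (x / 2) = x / π by ring] at h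

lemma le_four_mul_sin_half (hx0 : 0 ≤ x) (hx : x ≤ π) : x ≤ 4 * sin (x / 2) :=
  calc x = π * (x / π) := by field_simp
    _ ≤ 4 * sin (x / 2) := by
      gcongr
      exacts [pi_le_four, div_pi_le_sin_half hx0 hx]

lemma le_four_mul_of_pow_three_eq_sin_half {r : ℝ} (hx0 : 0 ≤ x) (hx : x ≤ π) (hr0 : 0 ≤ r)
    (hr1 : r ≤ 1) (hr : r ^ 3 = sin (x / 2)) : x ≤ 4 * r := by
  have hr3 : r ^ 3 ≤ r := pow_le_of_le_one hr0 hr1 three_ne_zero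
  linarith [le_four_mul_sin_half hx0 hx]

lemma sin_half_pos (hx : x ∈ Ioo 0 (2 * π)) : 0 < sin (x / 2) :=
  sin_pos_of_pos_of_lt_pi (by linarith [hx.1]) (by linarith [hx.2])

lemma sin_half_two_pi_sub (x : ℝ) : sin ((2 * π - x) / 2) = sin (x / 2) := by
  rw [sub_div, mul_div_cancel_left₀ π two_ne_zero, sin_pi_sub]

lemma cos_half_two_pi_sub (x : ℝ) : cos ((2 * π - x) / 2) = -cos (x / 2) := by
  rw [sub_div, mul_div_cancel_left₀ π two_ne_zero, cos_pi_sub]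

end Trigonometry

section ResonantManifold

variable {p q : ℝ}

lemma ω_nonneg (p : ℝ) : 0 ≤ ω p := abs_nonneg _

lemma ω_le_one (p : ℝ) : ω p ≤ 1 := abs_sin_le_one _

lemma ω_eq_sin_half (hp : p ∈ Ioo 0 (2 * π)) : ω p = sin (p / 2) :=
  abs_of_pos (sin_half_pos hp)

lemma ω_resH_mul_ω (hd : cos ((q - p) / 4) ≠ 0) (hpq : 0 ≤ sin (p / 2) * sin (q / 2)) :
    ω (resH p q) * ω (p + resH p q - q) =
      tan ((q - p) / 4) ^ 2 * (sin (p / 2) * sin (q / 2)) := by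
  set d := (q - p) / 4
  set u := tan (|q - p| / 4) * cos ((p + q) / 4) with hu_def
  have hu_sq : u ^ 2 = sin d ^ 2 - tan d ^ 2 * (sin (p / 2) * sin (q / 2)) := by
    have htan : tan (|q - p| / 4) ^ 2 = tan d ^ 2 := by
      rcases abs_choice (q - p) with h | h
      · rw [h]
      · rw [h, neg_div, tan_neg, neg_sq]
    rw [hu_def, mul_pow, htan, ← mul_pow, tan_mul_cos_sq _ hd,
      show (p + q) / 4 + d = q / 2 by ring, show (p + q) / 4 - d = p / 2 by ring,
      mul_comm (sin (q / 2))]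
  have hnonneg : 0 ≤ tan d ^ 2 * (sin (p / 2) * sin (q / 2)) := by positivity
  have hu_le : |u| ≤ 1 := (sq_le_one_iff_abs_le_one u).1 (by linarith [sin_sq_le_one d])
  have hp₁ : resH p q / 2 = arcsin u + d := by
    rw [resH]
    ring
  have hp₃ : (p + resH p q - q) / 2 = arcsin u - d := by
    rw [resH]
    ring
  rw [ω, ω, hp₁, hp₃, ← abs_mul, sin_add_mul_sin_sub,
    sin_arcsin (abs_le.1 hu_le).1 (abs_le.1 hu_le).2, hu_sq, sub_sub_cancel_left, abs_neg,
    abs_of_nonneg hnonneg]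

lemma sin_half_mul_sin_half_le_Fplus (hpq : 0 ≤ sin (p / 2) * sin (q / 2)) :
    sin (p / 2) * sin (q / 2) ≤ Fplus p q := by
  rw [Fplus]
  linarith [sq_nonneg (cos (p / 2) + cos (q / 2))]

lemma Fplus_reflect (p q : ℝ) : Fplus (2 * π - p) (2 * π - q) = Fplus p q := by
  simp only [Fplus, sin_half_two_pi_sub, cos_half_two_pi_sub]
  ring

/-- The kernel `K₂` stripped of its Rayleigh–Jeans factors, with the momenta `p₁` and `p₃`
eliminated by the resonance identity `ω_resH_mul_ω`; it agrees with that part of `K₂` on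
`(0, 2π)²` only. -/
def bareK2 (p q : ℝ) : ℝ :=
  tan ((q - p) / 4) ^ 2 * (sin (p / 2) * sin (q / 2)) ^ 2 / √(Fplus p q)

lemma bareK2_nonneg (p q : ℝ) : 0 ≤ bareK2 p q := by
  unfold bareK2
  positivity

lemma bareK2_reflect (p q : ℝ) : bareK2 (2 * π - p) (2 * π - q) = bareK2 p q := by
  rw [bareK2, bareK2, Fplus_reflect, sin_half_two_pi_sub, sin_half_two_pi_sub,
    show (2 * π - q - (2 * π - p)) / 4 = -((q - p) / 4) by ring, tan_neg, neg_sq]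

section LowerBound

variable {r t : ℝ}

lemma sqrt_Fplus_two_pi_sub_le (hp0 : 0 ≤ p) (hpr : p ≤ 4 * r) (hr : r ^ 3 = sin (p / 2))
    (ht0 : 0 ≤ t) (htr : t ≤ r) : √(Fplus p (2 * π - t)) ≤ 3 * r ^ 2 := by
  have hr0 : 0 ≤ r := ht0.trans htr
  have hcos_p : 1 - 2 * r ^ 2 ≤ cos (p / 2) :=
    le_trans (by nlinarith) one_sub_sq_div_two_le_cos
  have hcos_t : 1 - 2 * r ^ 2 ≤ cos (t / 2) :=
    le_trans (by nlinarith) one_sub_sq_div_two_le_cos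
  have hcos : (cos (p / 2) - cos (t / 2)) ^ 2 ≤ (2 * r ^ 2) ^ 2 :=
    sq_le_sq' (by linarith [cos_le_one (t / 2)]) (by linarith [cos_le_one (p / 2)])
  have hsin : r ^ 3 * sin (t / 2) ≤ r ^ 3 * r := by
    gcongr
    linarith [sin_le (x := t / 2) (by linarith)]
  refine sqrt_le_iff.2 ⟨by positivity, ?_⟩
  rw [Fplus, sin_half_two_pi_sub, cos_half_two_pi_sub, ← hr]
  linarith [pow_nonneg hr0 4]

lemma one_div_six_mul_le_tan (hp0 : 0 ≤ p) (hpr : p ≤ 4 * r) (ht : 0 < t) (htr : t ≤ r)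
    (hr1 : r ≤ 1) : 1 / (6 * r) ≤ tan ((2 * π - t - p) / 4) := by
  set y := (t + p) / 4 with hy_def
  have hr0 : 0 < r := ht.trans_le htr
  have hy0 : 0 < y := by positivity
  have hyr : y ≤ 5 / 4 * r := by linarith
  have hsin0 : 0 < sin y := sin_pos_of_pos_of_lt_pi hy0 (by linarith [pi_gt_three])
  have hsin : sin y ≤ 5 / 4 * r := (sin_le hy0.le).trans hyr
  have hcos : 7 / 32 ≤ cos y := le_trans (by nlinarith) one_sub_sq_div_two_le_cos
  rw [show (2 * π - t - p) / 4 = π / 2 - y by ring, tan_pi_div_two_sub, tan_eq_sin_div_cos,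
    inv_div, div_le_div_iff₀ (by positivity) hsin0]
  nlinarith

/-- At distance of order `r = sin(p/2)^{1/3}` from the opposite endpoint, the two terms of `F₊` are
both of order `r⁴`; integrating over an interval of length `r / 2` at that distance gives the
exponent `5/3` of `exists_mul_rpow_le_afreq`. -/
lemma le_bareK2_two_pi_sub (hp0 : 0 ≤ p) (hpπ : p ≤ π) (hr0 : 0 < r) (hr1 : r ≤ 1)
    (hr : r ^ 3 = sin (p / 2)) (hrt : r / 2 ≤ t) (htr : t ≤ r) :
    r ^ 4 / 6912 ≤ bareK2 p (2 * π - t) := by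
  have ht0 : 0 < t := by linarith
  have htπ : t ≤ π := by linarith [pi_gt_three]
  have hsin : r / 8 ≤ sin (t / 2) := by linarith [le_four_mul_sin_half ht0.le htπ]
  have hpr := le_four_mul_of_pow_three_eq_sin_half hp0 hpπ hr0.le hr1 hr
  have htan := one_div_six_mul_le_tan hp0 hpr ht0 htr hr1
  have hF := sqrt_Fplus_two_pi_sub_le hp0 hpr hr ht0.le htr
  have hF_pos : 0 < √(Fplus p (2 * π - t)) := by
    have hpos : 0 < sin (p / 2) * sin ((2 * π - t) / 2) := by
      rw [← hr, sin_half_two_pi_sub]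
      exact mul_pos (pow_pos hr0 3) (by linarith)
    exact sqrt_pos.2 (hpos.trans_le (sin_half_mul_sin_half_le_Fplus hpos.le))
  rw [bareK2, sin_half_two_pi_sub, ← hr]
  calc r ^ 4 / 6912 = (1 / (6 * r)) ^ 2 * (r ^ 3 * (r / 8)) ^ 2 / (3 * r ^ 2) := by
        field_simp
        norm_num
    _ ≤ _ := by gcongr

lemma exists_forall_mem_Icc_le_bareK2 (hp : p ∈ Ioo 0 (2 * π)) (hr0 : 0 < r)
    (hr : r ^ 3 = sin (p / 2)) :
    ∃ a > 0, a + r / 2 < 2 * π ∧ ∀ q ∈ Icc a (a + r / 2), r ^ 4 / 6912 ≤ bareK2 p q := by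
  have hr1 : r ≤ 1 := (pow_le_one_iff_of_nonneg hr0.le three_ne_zero).1 (hr ▸ sin_le_one _)
  have hπ := pi_gt_three
  rcases le_total p π with hpπ | hpπ
  · refine ⟨2 * π - r, by linarith, by linarith, fun q hq ↦ ?_⟩
    rw [← sub_sub_cancel (2 * π) q]
    exact le_bareK2_two_pi_sub hp.1.le hpπ hr0 hr1 hr (by linarith [hq.2]) (by linarith [hq.1])
  · refine ⟨r / 2, by linarith, by linarith, fun q hq ↦ ?_⟩
    rw [← bareK2_reflect]
    exact le_bareK2_two_pi_sub (by linarith [hp.2]) (by linarith) hr0 hr1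
      (hr.trans (sin_half_two_pi_sub p).symm) hq.1 (by linarith [hq.2])

end LowerBound

end ResonantManifold

section Measurability

@[fun_prop]
lemma measurable_ω : Measurable ω := by
  unfold ω
  fun_prop

lemma measurable_resH : Measurable fun z : ℝ × ℝ ↦ resH z.1 z.2 := by
  simp only [resH, tan_eq_sin_div_cos]
  fun_prop

@[fun_prop]
lemma measurable_fRJ (β γ : ℝ) : Measurable (fRJ β γ) := by
  unfold fRJ
  fun_prop

lemma measurable_Fplus : Measurable fun z : ℝ × ℝ ↦ Fplus z.1 z.2 := by
  unfold Fplus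
  fun_prop

lemma measurable_K2 (β γ : ℝ) : Measurable fun z : ℝ × ℝ ↦ K2 β γ z.1 z.2 := by
  have hresH := measurable_resH
  have hF := measurable_Fplus
  unfold K2
  fun_prop

lemma afreq_eq_integral_K2 (β γ p : ℝ) :
    afreq β γ p = (∫ q in (0 : ℝ)..2 * π, K2 β γ p q * fRJ β γ q) / fRJ β γ p := by
  rw [afreq, div_mul_eq_mul_div, ← intervalIntegral.integral_const_mul]
  congr! 3
  rw [K2]
  ring

lemma measurable_afreq (β γ : ℝ) : Measurable (afreq β γ) := by
  have hint : Measurable fun p ↦ ∫ q in (0 : ℝ)..2 * π, K2 β γ p q * fRJ β γ q := by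
    simp only [intervalIntegral.integral_of_le two_pi_pos.le]
    have hK2 := measurable_K2 β γ
    have hmeas : Measurable fun z : ℝ × ℝ ↦ K2 β γ z.1 z.2 * fRJ β γ z.2 := by fun_prop
    exact hmeas.stronglyMeasurable.integral_prod_right'.measurable
  simp only [funext (afreq_eq_integral_K2 β γ)]
  fun_prop

end Measurability

section CollisionKernel

variable {β γ p q : ℝ}

lemma fRJ_pos (hβ : 0 ≤ β) (hγ : 0 < γ) (p : ℝ) : 0 < fRJ β γ p :=
  one_div_pos.2 (add_pos_of_nonneg_of_pos (mul_nonneg hβ (ω_nonneg p)) hγ)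

lemma fRJ_le (hβ : 0 ≤ β) (hγ : 0 < γ) (p : ℝ) : fRJ β γ p ≤ 1 / γ :=
  one_div_le_one_div_of_le hγ (le_add_of_nonneg_left (mul_nonneg hβ (ω_nonneg p)))

lemma le_fRJ (hβ : 0 ≤ β) (hγ : 0 < γ) (p : ℝ) : 1 / (β + γ) ≤ fRJ β γ p := by
  refine one_div_le_one_div_of_le
    (add_pos_of_nonneg_of_pos (mul_nonneg hβ (ω_nonneg p)) hγ) ?_
  gcongr
  exact mul_le_of_le_one_right hβ (ω_le_one p)

lemma K2_nonneg (hβ : 0 ≤ β) (hγ : 0 < γ) (p q : ℝ) : 0 ≤ K2 β γ p q := by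
  have hω := ω_nonneg
  have hf x := (fRJ_pos hβ hγ x).le
  exact div_nonneg (mul_nonneg (mul_nonneg (mul_nonneg (mul_nonneg (hω _) (hω _)) (hω _)) (hω _))
    (mul_nonneg (hf _) (hf _))) (sqrt_nonneg _)

lemma K2_eq_mul_bareK2 (hp : p ∈ Ioo 0 (2 * π)) (hq : q ∈ Ioo 0 (2 * π)) :
    K2 β γ p q = fRJ β γ (resH p q) * fRJ β γ (p + resH p q - q) * bareK2 p q := by
  have hcos : cos ((q - p) / 4) ≠ 0 :=
    (cos_pos_of_mem_Ioo ⟨by linarith [hp.2, hq.1], by linarith [hp.1, hq.2]⟩).ne'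
  have hres := ω_resH_mul_ω hcos (mul_pos (sin_half_pos hp) (sin_half_pos hq)).le
  rw [K2, bareK2, ω_eq_sin_half hp, ω_eq_sin_half hq]
  linear_combination (sin (p / 2) * sin (q / 2) *
    (fRJ β γ (resH p q) * fRJ β γ (p + resH p q - q)) / √(Fplus p q)) * hres

lemma mul_bareK2_le_K2 (hβ : 0 ≤ β) (hγ : 0 < γ) (hp : p ∈ Ioo 0 (2 * π))
    (hq : q ∈ Ioo 0 (2 * π)) : (1 / (β + γ)) ^ 2 * bareK2 p q ≤ K2 β γ p q := by
  rw [K2_eq_mul_bareK2 hp hq, sq]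
  gcongr
  exacts [bareK2_nonneg p q, (fRJ_pos hβ hγ _).le, le_fRJ hβ hγ _, le_fRJ hβ hγ _]

lemma K2_le (hβ : 0 ≤ β) (hγ : 0 < γ) (hp : p ∈ Ioo 0 (2 * π)) (hq : q ∈ Ioo 0 (2 * π)) :
    K2 β γ p q ≤ (1 / γ) ^ 2 * (√(sin (p / 2)) * √(sin (q / 2))) := by
  have hpq := mul_pos (sin_half_pos hp) (sin_half_pos hq)
  rw [← sqrt_mul (sin_half_pos hp).le]
  set s := sin (p / 2) * sin (q / 2)
  have hF : √s ≤ √(Fplus p q) := sqrt_le_sqrt (sin_half_mul_sin_half_le_Fplus hpq.le)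
  have hω : ω (resH p q) * ω (p + resH p q - q) ≤ 1 :=
    mul_le_one₀ (ω_le_one _) (ω_nonneg _) (ω_le_one _)
  have hf : fRJ β γ (resH p q) * fRJ β γ (p + resH p q - q) ≤ (1 / γ) ^ 2 := by
    rw [sq]
    gcongr
    exacts [(fRJ_pos hβ hγ _).le, fRJ_le hβ hγ _, fRJ_le hβ hγ _]
  have hf0 : 0 ≤ fRJ β γ (resH p q) * fRJ β γ (p + resH p q - q) :=
    mul_nonneg (fRJ_pos hβ hγ _).le (fRJ_pos hβ hγ _).le
  calc K2 β γ p q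
    _ = s * (ω (resH p q) * ω (p + resH p q - q)) *
          (fRJ β γ (resH p q) * fRJ β γ (p + resH p q - q)) / √(Fplus p q) := by
      rw [K2, ω_eq_sin_half hp, ω_eq_sin_half hq]
      ring
    _ ≤ s * 1 * (1 / γ) ^ 2 / √s := by gcongr
    _ = (1 / γ) ^ 2 * √s := by rw [mul_one, mul_div_right_comm, div_sqrt, mul_comm]

lemma intervalIntegrable_K2_mul_fRJ (hβ : 0 ≤ β) (hγ : 0 < γ) (hp : p ∈ Ioo 0 (2 * π)) :
    IntervalIntegrable (fun q ↦ K2 β γ p q * fRJ β γ q) volume 0 (2 * π) := by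
  rw [intervalIntegrable_iff_integrableOn_Ioo_of_le two_pi_pos.le]
  have hmeas : Measurable fun q ↦ K2 β γ p q * fRJ β γ q := by
    have hK2 := measurable_K2 β γ
    fun_prop
  refine Measure.integrableOn_of_bounded (M := (1 / γ) ^ 2 * (1 * 1) * (1 / γ))
    measure_Ioo_lt_top.ne hmeas.aestronglyMeasurable ?_
  filter_upwards [ae_restrict_mem measurableSet_Ioo] with q hq
  rw [norm_of_nonneg (mul_nonneg (K2_nonneg hβ hγ p q) (fRJ_pos hβ hγ q).le)]
  gcongr
  · exact (fRJ_pos hβ hγ q).le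
  · refine (K2_le hβ hγ hp hq).trans ?_
    gcongr <;> exact sqrt_le_one.2 (sin_le_one _)
  · exact fRJ_le hβ hγ q

end CollisionKernel

lemma mul_sub_le_intervalIntegral {f : ℝ → ℝ} {a b c d m : ℝ}
    (hf : IntervalIntegrable f volume a b) (hf0 : ∀ x, 0 ≤ f x) (hac : a ≤ c) (hcd : c ≤ d)
    (hdb : d ≤ b) (hm : ∀ x ∈ Icc c d, m ≤ f x) : m * (d - c) ≤ ∫ x in a..b, f x := by
  have hf_sub : IntervalIntegrable f volume c d :=
    hf.mono_set (by grind [uIcc_of_le, Icc_subset_Icc])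
  calc m * (d - c) = ∫ _ in c..d, m := by
        rw [intervalIntegral.integral_const, smul_eq_mul, mul_comm]
    _ ≤ ∫ x in c..d, f x :=
      intervalIntegral.integral_mono_on hcd intervalIntegrable_const hf_sub hm
    _ ≤ ∫ x in a..b, f x :=
      intervalIntegral.integral_mono_interval hac hcd hdb (.of_forall hf0) hf

section CollisionFrequency

variable {β γ : ℝ}

lemma mul_pow_le_integral_K2_mul_fRJ (hβ : 0 ≤ β) (hγ : 0 < γ) {p r : ℝ}
    (hp : p ∈ Ioo 0 (2 * π)) (hr0 : 0 < r) (hr : r ^ 3 = sin (p / 2)) :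
    (1 / (β + γ)) ^ 3 / 13824 * r ^ 5 ≤ ∫ q in (0 : ℝ)..2 * π, K2 β γ p q * fRJ β γ q := by
  obtain ⟨a, ha0, ha, hbare⟩ := exists_forall_mem_Icc_le_bareK2 hp hr0 hr
  have hlower : ∀ q ∈ Icc a (a + r / 2),
      (1 / (β + γ)) ^ 2 * (r ^ 4 / 6912) * (1 / (β + γ)) ≤ K2 β γ p q * fRJ β γ q := by
    intro q hq
    have hq_mem : q ∈ Ioo 0 (2 * π) := ⟨ha0.trans_le hq.1, hq.2.trans_lt ha⟩
    have hK2 : (1 / (β + γ)) ^ 2 * (r ^ 4 / 6912) ≤ K2 β γ p q :=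
      (mul_le_mul_of_nonneg_left (hbare q hq) (by positivity)).trans
        (mul_bareK2_le_K2 hβ hγ hp hq_mem)
    exact mul_le_mul hK2 (le_fRJ hβ hγ q) (by positivity) (K2_nonneg hβ hγ p q)
  calc (1 / (β + γ)) ^ 3 / 13824 * r ^ 5
    _ = (1 / (β + γ)) ^ 2 * (r ^ 4 / 6912) * (1 / (β + γ)) * (a + r / 2 - a) := by ring
    _ ≤ ∫ q in (0 : ℝ)..2 * π, K2 β γ p q * fRJ β γ q :=
      mul_sub_le_intervalIntegral (intervalIntegrable_K2_mul_fRJ hβ hγ hp)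
        (fun q ↦ mul_nonneg (K2_nonneg hβ hγ p q) (fRJ_pos hβ hγ q).le)
        ha0.le (by linarith) ha.le hlower

theorem exists_mul_rpow_le_afreq (hβ : 0 ≤ β) (hγ : 0 < γ) :
    ∃ c > 0, ∀ p ∈ Ioo 0 (2 * π), c * sin (p / 2) ^ (5 / 3 : ℝ) ≤ afreq β γ p := by
  refine ⟨(1 / (β + γ)) ^ 3 / 13824 * γ, by positivity, fun p hp ↦ ?_⟩
  have hs := sin_half_pos hp
  set r := sin (p / 2) ^ (1 / 3 : ℝ)
  have hr_pow (n : ℕ) : r ^ n = sin (p / 2) ^ (1 / 3 * n : ℝ) := (rpow_mul_natCast hs.le _ n).symm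
  have hr3 : r ^ 3 = sin (p / 2) := by
    rw [hr_pow]
    norm_num
  have hr5 : r ^ 5 = sin (p / 2) ^ (5 / 3 : ℝ) := by
    rw [hr_pow]
    norm_num
  rw [afreq_eq_integral_K2, le_div_iff₀ (fRJ_pos hβ hγ p), ← hr5]
  calc (1 / (β + γ)) ^ 3 / 13824 * γ * r ^ 5 * fRJ β γ p
    _ ≤ (1 / (β + γ)) ^ 3 / 13824 * γ * r ^ 5 * (1 / γ) := by
      gcongr
      exact fRJ_le hβ hγ p
    _ = (1 / (β + γ)) ^ 3 / 13824 * r ^ 5 := by field_simp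
    _ ≤ _ := mul_pow_le_integral_K2_mul_fRJ hβ hγ hp (rpow_pos_of_pos hs _) hr3

lemma afreq_nonneg (hβ : 0 ≤ β) (hγ : 0 < γ) (p : ℝ) : 0 ≤ afreq β γ p := by
  rw [afreq_eq_integral_K2]
  refine div_nonneg (intervalIntegral.integral_nonneg two_pi_pos.le fun q _ ↦ ?_)
    (fRJ_pos hβ hγ p).le
  exact mul_nonneg (K2_nonneg hβ hγ p q) (fRJ_pos hβ hγ q).le

lemma exists_afreq_rpow_mul_sqrt_le (hβ : 0 ≤ β) (hγ : 0 < γ) :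
    ∃ C ≥ 0, ∀ p ∈ Ioo 0 (2 * π), afreq β γ p ^ (-(1 : ℝ) / 2) * √(sin (p / 2)) ≤
      C * sin (p / 2) ^ (-(1 : ℝ) / 3) := by
  obtain ⟨c, hc, hafreq⟩ := exists_mul_rpow_le_afreq hβ hγ
  refine ⟨c ^ (-(1 : ℝ) / 2), by positivity, fun p hp ↦ ?_⟩
  have hs := sin_half_pos hp
  set s := sin (p / 2)
  calc afreq β γ p ^ (-(1 : ℝ) / 2) * √s
    _ ≤ (c * s ^ (5 / 3 : ℝ)) ^ (-(1 : ℝ) / 2) * √s :=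
      mul_le_mul_of_nonneg_right
        (rpow_le_rpow_of_nonpos (by positivity) (hafreq p hp) (by norm_num)) (sqrt_nonneg s)
    _ = c ^ (-(1 : ℝ) / 2) * s ^ (-(1 : ℝ) / 3) := by
      rw [mul_rpow hc.le (by positivity), ← rpow_mul hs.le, sqrt_eq_rpow, mul_assoc,
        ← rpow_add hs]
      norm_num

end CollisionFrequency

section WeightedKernel

variable {β γ : ℝ}

theorem exists_abs_weighted_K2_le (hβ : 0 ≤ β) (hγ : 0 < γ) :
    ∃ C : ℝ, ∀ p ∈ Ioo 0 (2 * π), ∀ q ∈ Ioo 0 (2 * π),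
      |afreq β γ p ^ (-(1 : ℝ) / 2) * K2 β γ p q * afreq β γ q ^ (-(1 : ℝ) / 2)| ≤
        C * sin (p / 2) ^ (-(1 : ℝ) / 3) * sin (q / 2) ^ (-(1 : ℝ) / 3) := by
  obtain ⟨C, hC, hweight⟩ := exists_afreq_rpow_mul_sqrt_le hβ hγ
  refine ⟨(1 / γ) ^ 2 * C * C, fun p hp q hq ↦ ?_⟩
  have hsp := sin_half_pos hp
  have hap := rpow_nonneg (afreq_nonneg hβ hγ p) (-(1 : ℝ) / 2)
  have haq := rpow_nonneg (afreq_nonneg hβ hγ q) (-(1 : ℝ) / 2)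
  rw [abs_of_nonneg (mul_nonneg (mul_nonneg hap (K2_nonneg hβ hγ p q)) haq)]
  calc afreq β γ p ^ (-(1 : ℝ) / 2) * K2 β γ p q * afreq β γ q ^ (-(1 : ℝ) / 2)
    _ ≤ afreq β γ p ^ (-(1 : ℝ) / 2) * ((1 / γ) ^ 2 * (√(sin (p / 2)) * √(sin (q / 2)))) *
          afreq β γ q ^ (-(1 : ℝ) / 2) := by
      gcongr
      exact K2_le hβ hγ hp hq
    _ = (1 / γ) ^ 2 * ((afreq β γ p ^ (-(1 : ℝ) / 2) * √(sin (p / 2))) *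
          (afreq β γ q ^ (-(1 : ℝ) / 2) * √(sin (q / 2)))) := by ring
    _ ≤ (1 / γ) ^ 2 * ((C * sin (p / 2) ^ (-(1 : ℝ) / 3)) *
          (C * sin (q / 2) ^ (-(1 : ℝ) / 3))) := by
      gcongr (1 / γ) ^ 2 * (?_ * ?_)
      exacts [hweight p hp, hweight q hq]
    _ = (1 / γ) ^ 2 * C * C * sin (p / 2) ^ (-(1 : ℝ) / 3) * sin (q / 2) ^ (-(1 : ℝ) / 3) := by
      ring

instance : IsFiniteMeasure μ2π := by
  unfold μ2π
  infer_instance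

lemma sin_half_rpow_le {s p : ℝ} (hs : s ≤ 0) (hp : p ∈ Ioo 0 (2 * π)) :
    sin (p / 2) ^ s ≤ (p / π) ^ s + ((2 * π - p) / π) ^ s := by
  have hp0 := hp.1
  have hp' : 0 < 2 * π - p := sub_pos.2 hp.2
  rcases le_total p π with hpπ | hpπ
  · exact le_add_of_le_of_nonneg (rpow_le_rpow_of_nonpos (by positivity)
      (div_pi_le_sin_half hp0.le hpπ) hs) (by positivity)
  · have hsin := div_pi_le_sin_half hp'.le (by linarith)
    rw [sin_half_two_pi_sub] at hsin
    exact le_add_of_nonneg_of_le (by positivity)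
      (rpow_le_rpow_of_nonpos (by positivity) hsin hs)

lemma integrable_sin_half_rpow {s : ℝ} (hs : -1 < s) (hs0 : s ≤ 0) :
    Integrable (fun p ↦ sin (p / 2) ^ s) μ2π := by
  have hleft : IntervalIntegrable (fun p : ℝ ↦ (p / π) ^ s) volume 0 (2 * π) := by
    have hrpow : IntervalIntegrable (fun x : ℝ ↦ x ^ s) volume 0 2 :=
      intervalIntegral.intervalIntegrable_rpow' hs
    simpa only [zero_mul, div_inv_eq_mul, ← div_eq_mul_inv] using hrpow.comp_mul_right (c := π⁻¹)
  have hright : IntervalIntegrable (fun p : ℝ ↦ ((2 * π - p) / π) ^ s) volume 0 (2 * π) := by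
    simpa using (hleft.comp_sub_left (2 * π)).symm
  have hsum := hleft.add hright
  rw [intervalIntegrable_iff_integrableOn_Ioo_of_le two_pi_pos.le] at hsum
  refine hsum.mono' (Measurable.aestronglyMeasurable (by fun_prop)) ?_
  filter_upwards [ae_restrict_mem measurableSet_Ioo] with p hp
  rw [norm_of_nonneg (rpow_nonneg (sin_half_pos hp).le s)]
  exact sin_half_rpow_le hs0 hp

lemma integrable_sq_sin_half_rpow :
    Integrable (fun p ↦ (sin (p / 2) ^ (-(1 : ℝ) / 3)) ^ 2) μ2π := by
  refine (integrable_sin_half_rpow (s := -(2 / 3)) (by norm_num) (by norm_num)).congr ?_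
  filter_upwards [ae_restrict_mem measurableSet_Ioo] with p hp
  rw [← rpow_mul_natCast (sin_half_pos hp).le]
  norm_num

theorem memLp_weighted_K2 (hβ : 0 ≤ β) (hγ : 0 < γ) :
    MemLp (fun z : ℝ × ℝ ↦
      afreq β γ z.1 ^ (-(1 : ℝ) / 2) * K2 β γ z.1 z.2 * afreq β γ z.2 ^ (-(1 : ℝ) / 2))
      2 (μ2π.prod μ2π) := by
  obtain ⟨C, hC⟩ := exists_abs_weighted_K2_le hβ hγ
  have hbound : MemLp (fun z : ℝ × ℝ ↦
      C * (sin (z.1 / 2) ^ (-(1 : ℝ) / 3) * sin (z.2 / 2) ^ (-(1 : ℝ) / 3)))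
      2 (μ2π.prod μ2π) := by
    refine MemLp.const_mul ?_ C
    rw [memLp_two_iff_integrable_sq (Measurable.aestronglyMeasurable (by fun_prop))]
    simp only [mul_pow]
    exact integrable_sq_sin_half_rpow.mul_prod integrable_sq_sin_half_rpow
  have hmeas : Measurable fun z : ℝ × ℝ ↦
      afreq β γ z.1 ^ (-(1 : ℝ) / 2) * K2 β γ z.1 z.2 * afreq β γ z.2 ^ (-(1 : ℝ) / 2) := by
    have hafreq := measurable_afreq β γ
    have hK2 := measurable_K2 β γ
    fun_prop
  refine hbound.mono' hmeas.aestronglyMeasurable ?_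
  have hmem : ∀ᵐ z ∂μ2π.prod μ2π, z ∈ Ioo 0 (2 * π) ×ˢ Ioo 0 (2 * π) := by
    rw [μ2π, Measure.prod_restrict]
    exact ae_restrict_mem (measurableSet_Ioo.prod measurableSet_Ioo)
  filter_upwards [hmem] with z hz
  rw [norm_eq_abs, ← mul_assoc]
  exact hC z.1 hz.1 z.2 hz.2

end WeightedKernel

/-- **Compactness of the weighted `K₂` operator:** for `β, γ > 0`, the integral operator
on `L²(0,2π)` with kernel `a(p)^{−1/2} K₂(p,q) a(q)^{−1/2}` is a well-defined bounded
linear operator which is compact; indeed its kernel is bounded by a constant times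
`sin(p/2)^{−1/3} sin(q/2)^{−1/3}`, so it is Hilbert–Schmidt. -/
theorem stmt9 (β γ : ℝ) (hβ : 0 < β) (hγ : 0 < γ) :
    (∃ T : Lp ℝ 2 μ2π →L[ℝ] Lp ℝ 2 μ2π,
      (∀ g : Lp ℝ 2 μ2π,
        (T g : ℝ → ℝ) =ᵐ[μ2π] fun p => ∫ q in Set.Ioo (0:ℝ) (2 * π),
          afreq β γ p ^ (-(1:ℝ)/2) * K2 β γ p q * afreq β γ q ^ (-(1:ℝ)/2) * g q) ∧
      IsCompactOperator T) ∧
    (∃ Cb : ℝ, ∀ p ∈ Set.Ioo (0:ℝ) (2 * π), ∀ q ∈ Set.Ioo (0:ℝ) (2 * π),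
      |afreq β γ p ^ (-(1:ℝ)/2) * K2 β γ p q * afreq β γ q ^ (-(1:ℝ)/2)| ≤
        Cb * Real.sin (p / 2) ^ (-(1:ℝ)/3) * Real.sin (q / 2) ^ (-(1:ℝ)/3)) := by
  refine ⟨?_, exists_abs_weighted_K2_le hβ.le hγ⟩
  exact exists_isCompactOperator_of_memLp_kernel (memLp_weighted_K2 hβ.le hγ)
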